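/- Let H ∈ (0, 1/2), let c > 0 be a constant, and let α₂ ∈ (max(0, 3H/2 − 1/2), H). Then the integral ∬_{0 < η' ≤ η} g(η, η') (∫_{η+η'}^∞ f_{α₂}(ξ, η, η') dξ)² dη dη' is finite. -/

import Mathlib

/-!
Write `α = α₂`. On `0 < η' ≤ η` and `ξ > η + η'` one has `ξ - η' ≥ ξ / 2`, so the inner integrand is
at most `2^{1-α} (ξ - η)^{α-1} ξ^{α-2H}`. With `u = ξ - η` and `α - 2H < 0`, the factor
`ξ^{α-2H}` is at most `η^{α-2H}` for `u ≤ η` and at most `u^{α-2H}` for `u > η`. Since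
`0 < α < H`, integrating this majorant in `u` gives an inner integral of size at most
`C η^{2α-2H}` (`inner_le`).

The outer integrand is therefore bounded by the product of `C² η^{1-6H+4α} / (c + η²)` and
`η'^{1-2H} / (c + η'²)`. A function `x^p / (c + x²)` is integrable on `(0, ∞)` for `-1 < p < 1`
(`integrableOn_rpow_div`), and the lower bound `α > 3H/2 - 1/2` says exactly that
`1 - 6H + 4α > -1`.
-/

open MeasureTheory intervalIntegral

/-- `f α H ξ η η' = |ξ − η|^{α−1} |ξ − η'|^{α−1} ξ^{1−2H}` if `η' ≤ η`, and `0` otherwise. -/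
noncomputable def fKer (α H ξ η η' : ℝ) : ℝ :=
  if η' ≤ η then |ξ - η| ^ (α - 1) * |ξ - η'| ^ (α - 1) * ξ ^ (1 - 2*H) else 0

/-- `g c H η η' = (η^{1−2H}/(c + η²)) ((η')^{1−2H}/(c + (η')²))`. -/
noncomputable def gKer (c H η η' : ℝ) : ℝ :=
  (η ^ (1 - 2*H) / (c + η ^ 2)) * (η' ^ (1 - 2*H) / (c + η' ^ 2))

lemma integrableOn_rpow_div {c p : ℝ} (hc : 0 < c) (hp : -1 < p) (hp' : p < 1) :
    IntegrableOn (fun x : ℝ => x ^ p / (c + x ^ 2)) (Set.Ioi 0) := by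
  have hm : Measurable (fun x : ℝ => x ^ p / (c + x ^ 2)) := by fun_prop
  rw [← Set.Ioc_union_Ioi_eq_Ioi (zero_le_one (α := ℝ))]
  refine IntegrableOn.union ?_ ?_
  · have h1 : IntegrableOn (fun x : ℝ => x ^ p / c) (Set.Ioc 0 1) :=
      ((intervalIntegrable_iff_integrableOn_Ioc_of_le zero_le_one).1
        (intervalIntegral.intervalIntegrable_rpow' hp)).div_const c
    refine Integrable.mono' h1 hm.aestronglyMeasurable ?_
    filter_upwards [ae_restrict_mem measurableSet_Ioc] with x hx
    have hx0 := hx.1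
    rw [Real.norm_of_nonneg (by positivity)]
    gcongr
    nlinarith
  · have h1 : IntegrableOn (fun x : ℝ => x ^ (p - 2)) (Set.Ioi 1) :=
      integrableOn_Ioi_rpow_of_lt (by linarith) one_pos
    refine Integrable.mono' h1 hm.aestronglyMeasurable ?_
    filter_upwards [ae_restrict_mem measurableSet_Ioi] with x hx
    have hx0 : (0 : ℝ) < x := one_pos.trans hx
    rw [Real.norm_of_nonneg (by positivity), Real.rpow_sub hx0, Real.rpow_two]
    gcongr
    linarith

/-- Majorant of `u ↦ u^{α-1} (u + η)^{α-2H}` on `(0, ∞)`, extended by zero; the two summands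
cover `u ≤ η` and `u > η`. -/
noncomputable def majorant (α H η u : ℝ) : ℝ :=
  (Set.Ioc 0 η).indicator (fun u => η ^ (α - 2*H) * u ^ (α - 1)) u
    + (Set.Ioi η).indicator (fun u => u ^ (2*α - 2*H - 1)) u

lemma majorant_nonneg {α H η : ℝ} (hη : 0 < η) (u : ℝ) : 0 ≤ majorant α H η u := by
  refine add_nonneg (Set.indicator_nonneg (fun x hx => ?_) _)
    (Set.indicator_nonneg (fun x hx => ?_) _)
  · have := hx.1
    positivity
  · have : 0 < x := hη.trans hx
    positivity

lemma majorant_integral {α H η : ℝ} (hα : 0 < α) (hαH : α < H) (hη : 0 < η) :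
    Integrable (majorant α H η) ∧
      ∫ u, majorant α H η u = (1 / α + 1 / (2*H - 2*α)) * η ^ (2*α - 2*H) := by
  have i1 : IntegrableOn (fun u : ℝ => η ^ (α - 2*H) * u ^ (α - 1)) (Set.Ioc 0 η) :=
    ((intervalIntegrable_iff_integrableOn_Ioc_of_le hη.le).1
      (intervalIntegral.intervalIntegrable_rpow' (by linarith))).const_mul _
  have i2 : IntegrableOn (fun u : ℝ => u ^ (2*α - 2*H - 1)) (Set.Ioi η) :=
    integrableOn_Ioi_rpow_of_lt (by linarith) hη
  have j1 := i1.integrable_indicator measurableSet_Ioc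
  have j2 := i2.integrable_indicator measurableSet_Ioi
  refine ⟨j1.add j2, ?_⟩
  unfold majorant
  rw [integral_add j1 j2, MeasureTheory.integral_indicator measurableSet_Ioc,
    MeasureTheory.integral_indicator measurableSet_Ioi, integral_Ioi_rpow_of_lt (by linarith) hη,
    ← intervalIntegral.integral_of_le hη.le, intervalIntegral.integral_const_mul,
    integral_rpow (Or.inl (by linarith))]
  have e1 : α - 1 + 1 = α := by ring
  have e2 : 2*α - 2*H - 1 + 1 = 2*α - 2*H := by ring
  have e3 : η ^ (2*α - 2*H) = η ^ (α - 2*H) * η ^ α := by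
    rw [← Real.rpow_add hη]; congr 1; ring
  have h1 : 2*α - 2*H ≠ 0 := by linarith
  have h2 : 2*H - 2*α = -(2*α - 2*H) := by ring
  rw [e1, e2, e3, Real.zero_rpow hα.ne', h2]
  field_simp
  ring

lemma fKer_le_majorant {α H η η' ξ : ℝ} (hα : 0 < α) (hαH : α < H) (hH : H < 1/2)
    (hη' : 0 < η') (hle : η' ≤ η) (hξ : η + η' < ξ) :
    fKer α H ξ η η' ≤ 2 ^ (1 - α) * majorant α H η (ξ - η) := by
  have hη : 0 < η := hη'.trans_le hle
  have hξ0 : 0 < ξ := by linarith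
  have hu : 0 < ξ - η := by linarith
  have hv : 0 < ξ - η' := by linarith
  have k1 : (ξ - η') ^ (α - 1) ≤ 2 ^ (1 - α) * ξ ^ (α - 1) := by
    have : (ξ - η') ^ (α - 1) ≤ (ξ / 2) ^ (α - 1) :=
      Real.rpow_le_rpow_of_nonpos (by positivity) (by linarith) (by linarith)
    refine this.trans_eq ?_
    rw [Real.div_rpow hξ0.le (by norm_num), show (1 - α) = -(α - 1) by ring,
      Real.rpow_neg (by norm_num)]
    field_simp
  have k2 : (ξ - η) ^ (α - 1) * ξ ^ (α - 2*H) ≤ majorant α H η (ξ - η) := by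
    unfold majorant
    rcases le_or_gt (ξ - η) η with h | h
    · rw [Set.indicator_of_mem (show ξ - η ∈ Set.Ioc 0 η from ⟨hu, h⟩),
        Set.indicator_of_notMem (by simpa using h), add_zero, mul_comm]
      gcongr ?_ * _
      exact Real.rpow_le_rpow_of_nonpos hη (by linarith) (by linarith)
    · rw [Set.indicator_of_notMem (fun h' => absurd h'.2 (not_le.2 h)),
        Set.indicator_of_mem (show ξ - η ∈ Set.Ioi η from h), zero_add,
        show 2*α - 2*H - 1 = (α - 1) + (α - 2*H) by ring, Real.rpow_add hu]
      gcongr _ * ?_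
      exact Real.rpow_le_rpow_of_nonpos hu (by linarith) (by linarith)
  rw [fKer, if_pos hle, abs_of_pos hu, abs_of_pos hv]
  calc (ξ - η) ^ (α - 1) * (ξ - η') ^ (α - 1) * ξ ^ (1 - 2*H)
      ≤ (ξ - η) ^ (α - 1) * (2 ^ (1 - α) * ξ ^ (α - 1)) * ξ ^ (1 - 2*H) := by gcongr
    _ = 2 ^ (1 - α) * ((ξ - η) ^ (α - 1) * ξ ^ (α - 2*H)) := by
        rw [show α - 2*H = (α - 1) + (1 - 2*H) by ring, Real.rpow_add hξ0]; ring
    _ ≤ _ := by gcongr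

lemma fKer_nonneg {α H η η' ξ : ℝ} (hξ : 0 ≤ ξ) : 0 ≤ fKer α H ξ η η' := by
  unfold fKer
  split_ifs <;> positivity

lemma inner_le {α H η η' : ℝ} (hα : 0 < α) (hαH : α < H) (hH : H < 1/2)
    (hη' : 0 < η') (hle : η' ≤ η) :
    ∫ ξ in Set.Ioi (η + η'), fKer α H ξ η η'
      ≤ 2 ^ (1 - α) * (1 / α + 1 / (2*H - 2*α)) * η ^ (2*α - 2*H) := by
  have hη : 0 < η := hη'.trans_le hle
  obtain ⟨hi, hval⟩ := majorant_integral hα hαH hη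
  have hi' : Integrable (fun ξ => 2 ^ (1 - α) * majorant α H η (ξ - η)) :=
    (hi.comp_sub_right η).const_mul _
  calc ∫ ξ in Set.Ioi (η + η'), fKer α H ξ η η'
      ≤ ∫ ξ in Set.Ioi (η + η'), 2 ^ (1 - α) * majorant α H η (ξ - η) := by
        refine integral_mono_of_nonneg ?_ hi'.integrableOn ?_
        · filter_upwards [ae_restrict_mem measurableSet_Ioi] with ξ hξ
          exact fKer_nonneg (by have := Set.mem_Ioi.1 hξ; linarith)
        · filter_upwards [ae_restrict_mem measurableSet_Ioi] with ξ hξ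
          exact fKer_le_majorant hα hαH hH hη' hle hξ
    _ ≤ ∫ ξ, 2 ^ (1 - α) * majorant α H η (ξ - η) := by
        refine setIntegral_le_integral hi' (Filter.Eventually.of_forall fun ξ => ?_)
        exact mul_nonneg (by positivity) (majorant_nonneg hη _)
    _ = _ := by
        rw [MeasureTheory.integral_const_mul, integral_sub_right_eq_self (majorant α H η), hval, mul_assoc]

theorem stmt_11 (H c α₂ : ℝ) (hH₁ : 0 < H) (hH₂ : H < 1/2) (hc : 0 < c)
    (hα₁ : max 0 (3*H/2 - 1/2) < α₂) (hα₂ : α₂ < H) :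
    ∫⁻ p in {q : ℝ × ℝ | 0 < q.2 ∧ q.2 ≤ q.1},
        ENNReal.ofReal
          (gKer c H p.1 p.2 * (∫ ξ in Set.Ioi (p.1 + p.2), fKer α₂ H ξ p.1 p.2) ^ 2)
      < ⊤ := by
  obtain ⟨hα0, hα3⟩ := max_lt_iff.1 hα₁
  set C : ℝ := 2 ^ (1 - α₂) * (1 / α₂ + 1 / (2*H - 2*α₂)) with hC
  set A : ℝ → ℝ := fun x => C ^ 2 * (x ^ (1 - 6*H + 4*α₂) / (c + x ^ 2)) with hA
  set B : ℝ → ℝ := fun x => x ^ (1 - 2*H) / (c + x ^ 2) with hB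
  have iA : IntegrableOn A (Set.Ioi 0) :=
    (integrableOn_rpow_div hc (by linarith) (by linarith)).const_mul _
  have iB : IntegrableOn B (Set.Ioi 0) :=
    integrableOn_rpow_div hc (by linarith) (by linarith)
  have hS : MeasurableSet {q : ℝ × ℝ | 0 < q.2 ∧ q.2 ≤ q.1} :=
    (measurableSet_lt measurable_const measurable_snd).inter
      (measurableSet_le measurable_snd measurable_fst)
  calc _ ≤ ∫⁻ p in {q : ℝ × ℝ | 0 < q.2 ∧ q.2 ≤ q.1},
        ENNReal.ofReal (A p.1) * ENNReal.ofReal (B p.2) := by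
        refine setLIntegral_mono' hS ?_
        rintro ⟨η, η'⟩ ⟨hη', hle⟩
        dsimp only at hη' hle ⊢
        have hη : 0 < η := hη'.trans_le hle
        rw [← ENNReal.ofReal_mul (by positivity)]
        refine ENNReal.ofReal_le_ofReal ?_
        have h0 : 0 ≤ ∫ ξ in Set.Ioi (η + η'), fKer α₂ H ξ η η' :=
          setIntegral_nonneg measurableSet_Ioi fun ξ hξ =>
            fKer_nonneg (by have := Set.mem_Ioi.1 hξ; linarith)
        have h1 := inner_le hα0 hα₂ hH₂ hη' hle
        have hg : 0 ≤ gKer c H η η' := by unfold gKer; positivity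
        calc gKer c H η η' * (∫ ξ in Set.Ioi (η + η'), fKer α₂ H ξ η η') ^ 2
            ≤ gKer c H η η' * (C * η ^ (2*α₂ - 2*H)) ^ 2 := by gcongr
          _ = A η * B η' := by
            have e : η ^ (1 - 6*H + 4*α₂)
                = η ^ (1 - 2*H) * (η ^ (2*α₂ - 2*H) * η ^ (2*α₂ - 2*H)) := by
              rw [← Real.rpow_add hη, ← Real.rpow_add hη]; congr 1; ring
            simp only [hA, hB, gKer, e]
            ring
    _ ≤ ∫⁻ p in Set.Ioi (0 : ℝ) ×ˢ Set.Ioi (0 : ℝ),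
        ENNReal.ofReal (A p.1) * ENNReal.ofReal (B p.2) :=
        lintegral_mono_set fun q hq => ⟨hq.1.trans_le hq.2, hq.1⟩
    _ = (∫⁻ x in Set.Ioi 0, ENNReal.ofReal (A x)) * ∫⁻ y in Set.Ioi 0, ENNReal.ofReal (B y) := by
        rw [Measure.volume_eq_prod, ← Measure.prod_restrict]
        exact lintegral_prod_mul iA.aemeasurable.ennreal_ofReal iB.aemeasurable.ennreal_ofReal
    _ < ⊤ := ENNReal.mul_lt_top iA.lintegral_lt_top iB.lintegral_lt_top
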